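/- Let Φ be a Young function satisfying the Δ₂-condition. Then there exists a Young function Ψ which is equivalent to Φ, satisfies Ψ ≤ Φ pointwise, is smooth (C^∞) on (0,∞), and has Ψ'₊(0) = Φ'₊(0). -/

import Mathlib

/-!
Let `a = Φ'₊(0)`. The quotient `Φ(t)/t` is nondecreasing, so `a` exists and equals its infimum;
hence `F(t) = Φ(t) - a t` is again convex and nonnegative, vanishes at `0`, and is therefore
nondecreasing. Averaging over dilations, set
`Ψ(t) = a t + ∫ κ(r) F(t e⁻ʳ) dr`,
where `κ` is a smooth probability density supported in `[0, 1/2]`.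

* Convexity is inherited from `F`, since each `t ↦ F(t e⁻ʳ)` is convex.
* As `1/2 ≤ e⁻ʳ ≤ 1` on the support of `κ`, monotonicity gives `F(t/2) ≤ Ψ(t) - a t ≤ F(t)`.
  Thus `Φ(t/2) ≤ Ψ(t) ≤ Φ(t)`, and `Δ₂` yields the equivalence.
* In the variable `x = log t` the integral is the convolution of `κ` with the continuous function
  `x ↦ F(eˣ)`, hence smooth.
* The squeeze `a t ≤ Ψ(t) ≤ Φ(t)` forces `Ψ'₊(0) = a`. Removing the linear part before averaging
  is what makes this work: averaging `Φ` itself would shrink the slope at `0`.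
-/

open Filter Set MeasureTheory Topology

namespace YoungSmooth

/-- A smooth bump on `ℝ` with support `(0, 1/2)`; its normalization is the averaging density. -/
noncomputable def bump : ContDiffBump (1 / 4 : ℝ) := ⟨1 / 8, 1 / 4, by norm_num, by norm_num⟩

/-- The averaging density: a smooth probability density with topological support `[0, 1/2]`. -/
noncomputable def kappa : ℝ → ℝ := bump.normed volume

/-- The average of `F` over the dilations `t ↦ t e⁻ʳ`, weighted by `kappa`. -/
noncomputable def avg (F : ℝ → ℝ) (t : ℝ) : ℝ := ∫ r, kappa r * F (t * Real.exp (-r))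

lemma kappa_nonneg (r : ℝ) : 0 ≤ kappa r := bump.nonneg_normed r

lemma kappa_contDiff : ContDiff ℝ (⊤ : ℕ∞) kappa := bump.contDiff_normed

lemma kappa_compact : HasCompactSupport kappa := bump.hasCompactSupport_normed

lemma integral_kappa : ∫ r, kappa r = 1 := bump.integral_normed

lemma integrable_kappa : Integrable kappa :=
  kappa_contDiff.continuous.integrable_of_hasCompactSupport kappa_compact

lemma kappa_eq_zero_or (r : ℝ) : kappa r = 0 ∨ (0 ≤ r ∧ r ≤ 1 / 2) := by
  by_cases h : kappa r = 0
  · exact Or.inl h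
  · right
    have h1 : r ∈ Function.support (bump.normed volume) := h
    rw [bump.support_normed_eq, Metric.mem_ball, Real.dist_eq, abs_lt] at h1
    simp only [bump] at h1
    constructor <;> linarith [h1.1, h1.2]

section

variable {F : ℝ → ℝ}

/-- A convex function with `F 0 = 0` lies below its chords from the origin. -/
lemma scale_le (hF : ConvexOn ℝ (Ici 0) F) (h0 : F 0 = 0) {s t : ℝ}
    (hs : 0 ≤ s) (hs1 : s ≤ 1) (ht : 0 ≤ t) : F (s * t) ≤ s * F t := by
  have := hF.2 (show t ∈ Ici (0 : ℝ) from ht) (self_mem_Ici (a := (0 : ℝ)))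
    hs (sub_nonneg.2 hs1) (by ring)
  simpa [h0] using this

lemma mono_of_nonneg (hF : ConvexOn ℝ (Ici 0) F) (h0 : F 0 = 0)
    (hnn : ∀ t, 0 ≤ t → 0 ≤ F t) {u t : ℝ} (hu : 0 ≤ u) (hut : u ≤ t) : F u ≤ F t := by
  rcases hu.eq_or_lt with rfl | hu'
  · rw [h0]; exact hnn t hut
  have ht : 0 < t := hu'.trans_le hut
  have h1 : u / t ≤ 1 := (div_le_one ht).2 hut
  have h := scale_le hF h0 (div_nonneg hu ht.le) h1 ht.le
  rw [div_mul_cancel₀ _ ht.ne'] at h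
  exact h.trans (mul_le_of_le_one_left (hnn t ht.le) h1)

lemma continuous_comp_exp (hF : ConvexOn ℝ (Ici 0) F) {t : ℝ} (ht : 0 < t) (c : ℝ) :
    Continuous fun r : ℝ => F (t * Real.exp (c * r)) := by
  have hc : ContinuousOn F (Ioi 0) := by
    simpa using hF.continuousOn_interior
  refine hc.comp_continuous (by fun_prop) fun r => ?_
  exact mul_pos ht (Real.exp_pos _)

lemma integrable_avg (hF : ConvexOn ℝ (Ici 0) F) (h0 : F 0 = 0) {t : ℝ} (ht : 0 ≤ t) :
    Integrable fun r => kappa r * F (t * Real.exp (-r)) := by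
  rcases ht.eq_or_lt with rfl | ht
  · simp [h0]
  · have h := continuous_comp_exp hF ht (-1)
    simp only [neg_mul, one_mul] at h
    exact (kappa_contDiff.continuous.mul h).integrable_of_hasCompactSupport
      kappa_compact.mul_right

lemma avg_convex (hF : ConvexOn ℝ (Ici 0) F) (h0 : F 0 = 0) :
    ConvexOn ℝ (Ici 0) (avg F) := by
  refine ⟨convex_Ici 0, fun x hx y hy a b ha hb hab => ?_⟩
  have hx' : 0 ≤ x := hx
  have hy' : 0 ≤ y := hy
  have hz : 0 ≤ a * x + b * y := by positivity
  simp only [smul_eq_mul, avg]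
  rw [← integral_const_mul, ← integral_const_mul, ← integral_add
    ((integrable_avg hF h0 hx').const_mul a) ((integrable_avg hF h0 hy').const_mul b)]
  refine integral_mono (integrable_avg hF h0 hz)
    (((integrable_avg hF h0 hx').const_mul a).add ((integrable_avg hF h0 hy').const_mul b)) ?_
  intro r
  have he := (Real.exp_pos (-r)).le
  have h := hF.2 (show x * Real.exp (-r) ∈ Ici (0 : ℝ) from mul_nonneg hx' he)
    (show y * Real.exp (-r) ∈ Ici (0 : ℝ) from mul_nonneg hy' he) ha hb hab
  have h2 := mul_le_mul_of_nonneg_left h (kappa_nonneg r)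
  simp only [smul_eq_mul] at h2
  have e1 : (a * x + b * y) * Real.exp (-r) =
      a * (x * Real.exp (-r)) + b * (y * Real.exp (-r)) := by ring
  simp only [e1]
  linarith

lemma avg_le (hF : ConvexOn ℝ (Ici 0) F) (h0 : F 0 = 0)
    (hnn : ∀ t, 0 ≤ t → 0 ≤ F t) {t : ℝ} (ht : 0 ≤ t) : avg F t ≤ F t := by
  have h : avg F t ≤ ∫ r, kappa r * F t := by
    refine integral_mono (integrable_avg hF h0 ht) (integrable_kappa.mul_const _) fun r => ?_
    rcases kappa_eq_zero_or r with h | ⟨h1, -⟩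
    · simp [h]
    · refine mul_le_mul_of_nonneg_left (mono_of_nonneg hF h0 hnn
        (mul_nonneg ht (Real.exp_pos _).le) (mul_le_of_le_one_right ht ?_)) (kappa_nonneg r)
      exact Real.exp_le_one_iff.2 (by linarith)
  rwa [integral_mul_const, integral_kappa, one_mul] at h

lemma half_le_avg (hF : ConvexOn ℝ (Ici 0) F) (h0 : F 0 = 0)
    (hnn : ∀ t, 0 ≤ t → 0 ≤ F t) {t : ℝ} (ht : 0 ≤ t) : F (t / 2) ≤ avg F t := by
  have h : ∫ r, kappa r * F (t / 2) ≤ avg F t := by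
    refine integral_mono (integrable_kappa.mul_const _) (integrable_avg hF h0 ht) fun r => ?_
    rcases kappa_eq_zero_or r with h | ⟨-, h1⟩
    · simp [h]
    · refine mul_le_mul_of_nonneg_left (mono_of_nonneg hF h0 hnn
        (by positivity) ?_) (kappa_nonneg r)
      have := Real.add_one_le_exp (-r)
      nlinarith
  rwa [integral_mul_const, integral_kappa, one_mul] at h

/-- In the variable `log t` the average is a convolution with a smooth compactly supported
kernel. -/
lemma avg_smooth (hF : ConvexOn ℝ (Ici 0) F) :
    ContDiffOn ℝ (⊤ : ℕ∞) (avg F) (Ioi 0) := by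
  have hG : Continuous fun x : ℝ => F (Real.exp x) := by
    simpa using continuous_comp_exp hF one_pos 1
  have hs : ContDiff ℝ (⊤ : ℕ∞) (convolution kappa (fun x : ℝ => F (Real.exp x))
      (ContinuousLinearMap.lsmul ℝ ℝ) volume) :=
    kappa_compact.contDiff_convolution_left _ kappa_contDiff hG.locallyIntegrable
  have hl : ContDiffOn ℝ (⊤ : ℕ∞) Real.log (Ioi 0) :=
    Real.contDiffOn_log.mono fun x hx => ne_of_gt hx
  refine (hs.comp_contDiffOn hl).congr fun t ht => ?_
  simp only [avg, Function.comp, convolution, ContinuousLinearMap.lsmul_apply, smul_eq_mul]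
  refine integral_congr_ae (Eventually.of_forall fun r => ?_)
  simp only [sub_eq_add_neg, Real.exp_add, Real.exp_log (show 0 < t from ht)]

/-- The right derivative at `0` is the limit of the nondecreasing quotient `F t / t`, hence exists
and bounds the quotient from below. -/
lemma exists_slope (hF : ConvexOn ℝ (Ici 0) F) (h0 : F 0 = 0) (hnn : ∀ t, 0 ≤ t → 0 ≤ F t) :
    ∃ a, 0 ≤ a ∧ HasDerivWithinAt F a (Ici 0) 0 ∧ ∀ t, 0 ≤ t → a * t ≤ F t := by
  have hbd : BddBelow ((fun t => F t / t) '' Ioi 0) := by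
    refine ⟨0, ?_⟩
    rintro _ ⟨t, ht, rfl⟩
    have ht : 0 < t := ht
    exact div_nonneg (hnn t ht.le) ht.le
  have hmono : MonotoneOn (fun t => F t / t) (Ioi 0) := by
    intro u hu t ht hut
    have hu : 0 < u := hu
    have ht : 0 < t := ht
    have h := scale_le hF h0 (div_nonneg hu.le ht.le) ((div_le_one ht).2 hut) ht.le
    rw [div_mul_cancel₀ _ ht.ne'] at h
    simp only
    rw [div_le_iff₀ hu]
    calc F u ≤ u / t * F t := h
      _ = F t / t * u := by ring
  refine ⟨sInf ((fun t => F t / t) '' Ioi 0), ?_, ?_, ?_⟩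
  · refine Real.sInf_nonneg ?_
    rintro _ ⟨t, ht, rfl⟩
    have ht : 0 < t := ht
    exact div_nonneg (hnn t ht.le) ht.le
  · rw [hasDerivWithinAt_iff_tendsto_slope, Ici_sdiff_left]
    refine (hmono.tendsto_nhdsGT hbd).congr fun t => ?_
    simp [slope_def_field, h0]
  · intro t ht
    rcases ht.eq_or_lt with rfl | ht
    · simp [h0]
    · exact (le_div_iff₀ ht).1 (csInf_le hbd ⟨t, ht, rfl⟩)

end

end YoungSmooth

open YoungSmooth

/-- Smooth regularization of Young functions: if the Young function `Φ`
satisfies the `Δ₂`-condition, then there is a Young function `Ψ` equivalent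
to `Φ`, with `Ψ ≤ Φ`, smooth on `(0,∞)`, and `Ψ'₊(0) = Φ'₊(0)`. -/
theorem exists_smooth_equiv_young (Φ : ℝ → ℝ)
    (hconv : ConvexOn ℝ (Set.Ici 0) Φ) (h0 : Φ 0 = 0)
    (hnn : ∀ t, 0 ≤ t → 0 ≤ Φ t) (hlim : Tendsto Φ atTop atTop)
    (hΔ₂ : ∃ C : ℝ, 1 ≤ C ∧ ∀ t, 0 ≤ t → Φ (2 * t) ≤ C * Φ t) :
    ∃ Ψ : ℝ → ℝ,
      ConvexOn ℝ (Set.Ici 0) Ψ ∧ Ψ 0 = 0 ∧ Tendsto Ψ atTop atTop ∧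
      (∃ C : ℝ, 1 ≤ C ∧ ∀ t, 0 ≤ t → C⁻¹ * Φ t ≤ Ψ t ∧ Ψ t ≤ C * Φ t) ∧
      (∀ t, 0 ≤ t → Ψ t ≤ Φ t) ∧
      ContDiffOn ℝ (⊤ : ℕ∞) Ψ (Set.Ioi 0) ∧
      derivWithin Ψ (Set.Ici 0) 0 = derivWithin Φ (Set.Ici 0) 0 := by
  obtain ⟨a, ha, hda, hle⟩ := exists_slope hconv h0 hnn
  obtain ⟨C, hC1, hC⟩ := hΔ₂
  have hC0 : 0 < C := by linarith
  set F : ℝ → ℝ := fun t => Φ t - a * t with hFdef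
  have hF0 : F 0 = 0 := by simp [hFdef, h0]
  have hFnn : ∀ t, 0 ≤ t → 0 ≤ F t := fun t ht => sub_nonneg.2 (hle t ht)
  have hF : ConvexOn ℝ (Ici 0) F := by
    refine ⟨convex_Ici 0, fun x hx y hy p q hp hq hpq => ?_⟩
    have := hconv.2 hx hy hp hq hpq
    simp only [smul_eq_mul, hFdef] at this ⊢
    linarith
  have hup : ∀ t, 0 ≤ t → a * t + avg F t ≤ Φ t := fun t ht => by
    have : avg F t ≤ Φ t - a * t := avg_le hF hF0 hFnn ht
    linarith
  have hlow : ∀ t, 0 ≤ t → a * t ≤ a * t + avg F t := fun t ht => by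
    have := hFnn (t / 2) (by positivity)
    linarith [half_le_avg hF hF0 hFnn ht]
  have hequiv : ∀ t, 0 ≤ t → C⁻¹ * Φ t ≤ a * t + avg F t := fun t ht => by
    have h1 : Φ (t / 2) - a * (t / 2) ≤ avg F t := half_le_avg hF hF0 hFnn ht
    have h2 := hC (t / 2) (by positivity)
    rw [mul_div_cancel₀ t two_ne_zero] at h2
    have h3 : C⁻¹ * Φ t ≤ Φ (t / 2) := (inv_mul_le_iff₀ hC0).2 h2
    nlinarith [mul_nonneg ha ht]
  have hz : a * 0 + avg F 0 = 0 := by simp [avg, hF0]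
  refine ⟨fun t => a * t + avg F t, ?_, hz, ?_, ⟨C, hC1, fun t ht => ⟨hequiv t ht, ?_⟩⟩, hup,
    ?_, ?_⟩
  · refine ⟨convex_Ici 0, fun x hx y hy p q hp hq hpq => ?_⟩
    have := (avg_convex hF hF0).2 hx hy hp hq hpq
    simp only [smul_eq_mul] at this ⊢
    linarith
  · refine tendsto_atTop_mono' atTop ?_ (hlim.const_mul_atTop (inv_pos.2 hC0))
    filter_upwards [eventually_ge_atTop 0] with t ht using hequiv t ht
  · exact (hup t ht).trans (le_mul_of_one_le_left (hnn t ht) hC1)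
  · exact (contDiff_const.mul contDiff_id).contDiffOn.add (avg_smooth hF)
  · have hu := uniqueDiffOn_Ici (0 : ℝ) 0 self_mem_Ici
    rw [hda.derivWithin hu]
    refine HasDerivWithinAt.derivWithin ?_ hu
    rw [hasDerivWithinAt_iff_tendsto_slope, Ici_sdiff_left] at hda ⊢
    refine tendsto_of_tendsto_of_tendsto_of_le_of_le' tendsto_const_nhds hda ?_ ?_
    · filter_upwards [self_mem_nhdsWithin] with t ht
      have ht : 0 < t := ht
      rw [slope_def_field, hz, sub_zero, sub_zero, le_div_iff₀ ht]
      exact hlow t ht.le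
    · filter_upwards [self_mem_nhdsWithin] with t ht
      have ht : 0 < t := ht
      rw [slope_def_field, slope_def_field, hz, h0, sub_zero, sub_zero, sub_zero]
      exact div_le_div_of_nonneg_right (hup t ht.le) ht.le
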